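/- Let {N_n} be an increasing sequence of natural numbers, let 𝓜_n = span{xⁿ, x^{n+1}, …, x^{n+N_n}} ⊆ L²[0,1], and let 𝓜_∞ = { f ∈ L²[0,1] : dist(f, 𝓜_n) → 0 as n → ∞ }. Then there exists s ∈ [0,1] such that 𝓜_∞ = L²[s,1]. -/

import Mathlib

open MeasureTheory Filter Topology

/-- The measure on `[0,1]` underlying the Hilbert space `L²[0,1]`. -/
noncomputable def mu01 : Measure ℝ := volume.restrict (Set.Icc 0 1)

/-- The space `𝓜_n = span{xⁿ, …, x^{n+N_n}}` in `L²[0,1]`, where `mono k`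
represents the monomial `xᵏ`. -/
noncomputable def Mn (N : ℕ → ℕ) (mono : ℕ → Lp ℂ 2 mu01) (n : ℕ) :
    Submodule ℂ (Lp ℂ 2 mu01) :=
  Submodule.span ℂ (mono '' Set.Icc n (n + N n))

/-- The space `𝓜_∞` of `f ∈ L²[0,1]` with `dist(f, 𝓜_n) → 0`. -/
noncomputable def Minf (N : ℕ → ℕ) (mono : ℕ → Lp ℂ 2 mu01) : Set (Lp ℂ 2 mu01) :=
  {f | Tendsto (fun n => Metric.infDist f (Mn N mono n : Set (Lp ℂ 2 mu01)))
    atTop (𝓝 0)}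

/-!
Approximability by the `𝓜_n` survives multiplication by `x` and the dilations `f ↦ f(c ·)` with
`0 < c ≤ 1`, since `x · 𝓜_n ⊆ 𝓜_{n+1}` and a dilation only rescales monomials. So the closed
subspace `𝓜_∞` is invariant under these operators. Let `f ∈ 𝓜_∞` and `g ⟂ 𝓜_∞`. For each `c` all
moments of `x ↦ ⟪g x, f (c x)⟫` vanish, hence so does the function itself; letting `c` vary
(Fubini), `f` vanishes a.e. on `[0,x]` for almost every `x` with `g x ≠ 0`. If `s` is the largest
number such that every element of `𝓜_∞` vanishes on `[0,s]`, then `g` vanishes on `[s,1]`, so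
`L²[s,1] ⊆ 𝓜_∞ᗮᗮ = 𝓜_∞`.
-/

open scoped ENNReal InnerProductSpace

section InnerLimit

lemma tendsto_infDist_zero_iff_exists_seq {X : Type*} [PseudoMetricSpace X] {S : ℕ → Set X}
    (hS : ∀ n, (S n).Nonempty) {x : X} :
    Tendsto (fun n => Metric.infDist x (S n)) atTop (𝓝 0) ↔
      ∃ u : ℕ → X, (∀ n, u n ∈ S n) ∧ Tendsto u atTop (𝓝 x) := by
  refine ⟨fun h => ?_, ?_⟩
  · have near (n : ℕ) : ∃ y ∈ S n, dist x y < Metric.infDist x (S n) + 1 / ((n : ℝ) + 1) :=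
      (Metric.infDist_lt_iff (hS n)).1 (lt_add_of_pos_right _ Nat.one_div_pos_of_nat)
    choose u hu hux using near
    refine ⟨u, hu, tendsto_iff_dist_tendsto_zero.2 ?_⟩
    refine squeeze_zero (fun _ => dist_nonneg) (fun n => (dist_comm _ _).trans_le (hux n).le) ?_
    simpa using h.add (tendsto_one_div_add_atTop_nhds_zero_nat (𝕜 := ℝ))
  · rintro ⟨u, hu, hux⟩
    refine squeeze_zero (fun _ => Metric.infDist_nonneg)
      (fun n => Metric.infDist_le_dist_of_mem (hu n)) ?_
    simpa only [dist_comm x] using tendsto_iff_dist_tendsto_zero.1 hux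

variable {R E F : Type*} [Ring R] [SeminormedAddCommGroup E] [Module R E]
  [ContinuousConstSMul R E] [SeminormedAddCommGroup F] [Module R F] [ContinuousConstSMul R F]

/-- The inner (Kuratowski) limit of a sequence of subspaces: the vectors whose distance to `S n`
tends to zero, so that `𝓜_∞` is the inner limit of the `𝓜_n`. -/
def innerLimit (S : ℕ → Submodule R E) : Submodule R E where
  carrier := {f | Tendsto (fun n => Metric.infDist f (S n : Set E)) atTop (𝓝 0)}
  add_mem' {f g} hf hg := by
    obtain ⟨u, hu, huf⟩ := (tendsto_infDist_zero_iff_exists_seq fun n => (S n).nonempty).1 hf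
    obtain ⟨v, hv, hvg⟩ := (tendsto_infDist_zero_iff_exists_seq fun n => (S n).nonempty).1 hg
    exact (tendsto_infDist_zero_iff_exists_seq fun n => (S n).nonempty).2
      ⟨u + v, fun n => (S n).add_mem (hu n) (hv n), huf.add hvg⟩
  zero_mem' := (tendsto_infDist_zero_iff_exists_seq fun n => (S n).nonempty).2
    ⟨0, fun n => (S n).zero_mem, tendsto_const_nhds⟩
  smul_mem' a f hf := by
    obtain ⟨u, hu, huf⟩ := (tendsto_infDist_zero_iff_exists_seq fun n => (S n).nonempty).1 hf
    exact (tendsto_infDist_zero_iff_exists_seq fun n => (S n).nonempty).2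
      ⟨a • u, fun n => (S n).smul_mem a (hu n), huf.const_smul a⟩

lemma mem_innerLimit_iff_exists_seq {S : ℕ → Submodule R E} {f : E} :
    f ∈ innerLimit S ↔ ∃ u : ℕ → E, (∀ n, u n ∈ S n) ∧ Tendsto u atTop (𝓝 f) :=
  tendsto_infDist_zero_iff_exists_seq fun n => (S n).nonempty

lemma isClosed_innerLimit (S : ℕ → Submodule R E) : IsClosed (innerLimit S : Set E) :=
  (LipschitzWith.uniformEquicontinuous _ 1
    fun n => Metric.lipschitz_infDist_pt (S n : Set E)).equicontinuous.isClosed_setOfPred_tendsto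
      continuous_const

lemma innerLimit_shift (S : ℕ → Submodule R E) (j : ℕ) :
    innerLimit (fun n => S (n + j)) = innerLimit S :=
  SetLike.ext fun f => tendsto_add_atTop_iff_nat (f := fun n => Metric.infDist f (S n : Set E)) j

lemma map_mem_innerLimit {S : ℕ → Submodule R E} {S' : ℕ → Submodule R F} (T : E →L[R] F)
    (hT : ∀ n, S n ≤ (S' n).comap T.toLinearMap) {f : E} (hf : f ∈ innerLimit S) :
    T f ∈ innerLimit S' := by
  obtain ⟨u, hu, huf⟩ := mem_innerLimit_iff_exists_seq.1 hf
  exact mem_innerLimit_iff_exists_seq.2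
    ⟨T ∘ u, fun n => hT n (hu n), (T.continuous.tendsto f).comp huf⟩

end InnerLimit

section Moments

open Polynomial

variable {μ : Measure ℝ} {E : Type*} [NormedAddCommGroup E] [NormedSpace ℝ E] {F : ℝ → E}

lemma integral_polynomial_smul_eq_zero (hint : ∀ j : ℕ, Integrable (fun x => x ^ j • F x) μ)
    (hF : ∀ j : ℕ, ∫ x, x ^ j • F x ∂μ = 0) (p : ℝ[X]) : ∫ x, p.eval x • F x ∂μ = 0 := by
  simp_rw [eval_eq_sum_range, Finset.sum_smul, mul_smul]
  rw [integral_finsetSum _ fun i _ => (hint i).fun_smul (p.coeff i)]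
  simp only [integral_smul, hF, smul_zero, Finset.sum_const_zero]

variable {a b : ℝ}

lemma integrable_continuous_smul_of_ae_mem_Icc (hμ : ∀ᵐ x ∂μ, x ∈ Set.Icc a b)
    (hF : Integrable F μ) {g : ℝ → ℝ} (hg : Continuous g) :
    Integrable (fun x => g x • F x) μ := by
  rw [← Measure.restrict_eq_self_of_ae_mem hμ] at hF ⊢
  exact IntegrableOn.continuousOn_smul hF hg.continuousOn isCompact_Icc

lemma integral_continuous_smul_eq_zero_of_moments (hμ : ∀ᵐ x ∂μ, x ∈ Set.Icc a b)
    (hF : Integrable F μ) (hmom : ∀ j : ℕ, ∫ x, x ^ j • F x ∂μ = 0) {g : ℝ → ℝ}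
    (hg : Continuous g) : ∫ x, g x • F x ∂μ = 0 := by
  have hint {h : ℝ → ℝ} (hh : Continuous h) : Integrable (fun x => h x • F x) μ :=
    integrable_continuous_smul_of_ae_mem_Icc hμ hF hh
  refine norm_le_zero_iff.1 (le_of_forall_pos_lt_add fun δ hδ => ?_)
  obtain ⟨ε, hε, hεδ⟩ := exists_pos_mul_lt hδ (∫ x, ‖F x‖ ∂μ)
  obtain ⟨p, hp⟩ := exists_polynomial_near_of_continuousOn a b g hg.continuousOn ε hε
  calc ‖∫ x, g x • F x ∂μ‖
      = ‖∫ x, (g x • F x - p.eval x • F x) ∂μ‖ := by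
        rw [integral_sub (hint hg) (hint p.continuous),
          integral_polynomial_smul_eq_zero (fun j => hint (continuous_pow j)) hmom, sub_zero]
    _ ≤ ∫ x, ‖F x‖ * ε ∂μ := by
        refine norm_integral_le_of_norm_le (hF.norm.mul_const ε) ?_
        filter_upwards [hμ] with x hx
        rw [← sub_smul, norm_smul, Real.norm_eq_abs, abs_sub_comm, mul_comm]
        exact mul_le_mul_of_nonneg_left (hp x hx).le (norm_nonneg _)
    _ < 0 + δ := by rwa [integral_mul_const, zero_add]

lemma ae_eq_zero_of_moments_eq_zero [CompleteSpace E] (hμ : ∀ᵐ x ∂μ, x ∈ Set.Icc a b)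
    (hF : Integrable F μ) (hmom : ∀ j : ℕ, ∫ x, x ^ j • F x ∂μ = 0) : ∀ᵐ x ∂μ, F x = 0 :=
  ae_eq_zero_of_integral_contDiff_smul_eq_zero hF.locallyIntegrable fun _ hg _ =>
    integral_continuous_smul_eq_zero_of_moments hμ hF hmom hg.continuous

end Moments

section MulCoord

variable {𝕜 E : Type*} [RCLike 𝕜] [NormedAddCommGroup E] {p : ℝ≥0∞} [Fact (1 ≤ p)]
  {μ : Measure ℝ} {a b : ℝ}

lemma memLp_top_coord (hμ : ∀ᵐ x ∂μ, x ∈ Set.Icc a b) :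
    MemLp (fun x : ℝ => (x : 𝕜)) ∞ μ :=
  memLp_top_of_bound RCLike.continuous_ofReal.aestronglyMeasurable (max |a| |b|) <|
    hμ.mono fun _ hx => (RCLike.norm_ofReal _).trans_le (abs_le_max_abs_abs hx.1 hx.2)

section NormedSpace

variable [NormedSpace 𝕜 E]

variable (𝕜 E p) in
/-- Multiplication by the coordinate, `f ↦ (x ↦ x f(x))`, on `Lᵖ` of a measure carried by a
bounded interval. -/
noncomputable def mulCoord (hμ : ∀ᵐ x ∂μ, x ∈ Set.Icc a b) : Lp E p μ →L[𝕜] Lp E p μ :=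
  (ContinuousLinearMap.lsmul 𝕜 𝕜).holderL μ ∞ p p ((memLp_top_coord hμ).toLp _)

lemma coeFn_mulCoord (hμ : ∀ᵐ x ∂μ, x ∈ Set.Icc a b) (f : Lp E p μ) :
    mulCoord 𝕜 E p hμ f =ᵐ[μ] fun x => (x : 𝕜) • f x := by
  filter_upwards [(ContinuousLinearMap.lsmul 𝕜 𝕜).coeFn_holder (r := p)
    ((memLp_top_coord (𝕜 := 𝕜) hμ).toLp _) f, (memLp_top_coord (𝕜 := 𝕜) hμ).coeFn_toLp]
    with x hx hcoord
  rw [hcoord] at hx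
  exact hx

lemma coeFn_mulCoord_pow (hμ : ∀ᵐ x ∂μ, x ∈ Set.Icc a b) (j : ℕ) (f : Lp E p μ) :
    (mulCoord 𝕜 E p hμ ^ j) f =ᵐ[μ] fun x => (x : 𝕜) ^ j • f x := by
  induction j with
  | zero => simp
  | succ j ih =>
    rw [pow_succ']
    filter_upwards [coeFn_mulCoord (𝕜 := 𝕜) hμ ((mulCoord 𝕜 E p hμ ^ j) f), ih] with x hx hxj
    rw [mul_apply_eq_comp, hx, hxj, smul_smul, pow_succ']

lemma mulCoord_pow_mem {hμ : ∀ᵐ x ∂μ, x ∈ Set.Icc a b} {K : Submodule 𝕜 (Lp E p μ)}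
    (hK : ∀ f ∈ K, mulCoord 𝕜 E p hμ f ∈ K) {f : Lp E p μ} (hf : f ∈ K) (j : ℕ) :
    (mulCoord 𝕜 E p hμ ^ j) f ∈ K := by
  induction j with
  | zero => exact hf
  | succ j ih => rw [pow_succ']; exact hK _ ih

end NormedSpace

lemma ae_inner_eq_zero_of_mem_orthogonal [InnerProductSpace 𝕜 E]
    {hμ : ∀ᵐ x ∂μ, x ∈ Set.Icc a b} {K : Submodule 𝕜 (Lp E 2 μ)}
    (hK : ∀ f ∈ K, mulCoord 𝕜 E 2 hμ f ∈ K) {f g : Lp E 2 μ} (hf : f ∈ K) (hg : g ∈ Kᗮ) :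
    ∀ᵐ x ∂μ, ⟪g x, f x⟫_𝕜 = 0 := by
  refine ae_eq_zero_of_moments_eq_zero hμ (L2.integrable_inner g f) fun j => ?_
  calc ∫ x, x ^ j • ⟪g x, f x⟫_𝕜 ∂μ = ∫ x, ⟪g x, (mulCoord 𝕜 E 2 hμ ^ j) f x⟫_𝕜 ∂μ := by
        refine integral_congr_ae ?_
        filter_upwards [coeFn_mulCoord_pow (𝕜 := 𝕜) hμ j f] with x hx
        rw [hx, inner_smul_right, RCLike.real_smul_eq_coe_mul, RCLike.ofReal_pow]
    _ = ⟪g, (mulCoord 𝕜 E 2 hμ ^ j) f⟫_𝕜 := (L2.inner_def _ _).symm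
    _ = 0 := Submodule.inner_left_of_mem_orthogonal (mulCoord_pow_mem hK hf j) hg

end MulCoord

section CompLp

variable {α β 𝕜 E : Type*} [MeasurableSpace α] [MeasurableSpace β] {μ : Measure α} {ν : Measure β}
  [NormedRing 𝕜] [NormedAddCommGroup E] [NormedSpace ℝ E] [Module 𝕜 E] [IsBoundedSMul 𝕜 E]
  {p C : ℝ≥0∞} [Fact (1 ≤ p)] {φ : α → β}

lemma coeFn_compMeasurePreserving_LpToLpOfMeasureLeSMul (hφ : Measurable φ) (hC : C ≠ ∞)
    (h : μ.map φ ≤ C • ν) (f : Lp E p ν) :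
    Lp.compMeasurePreserving φ ⟨hφ, rfl⟩ (Lp.LpToLpOfMeasureLeSMul hC h f) =ᵐ[μ] f ∘ φ :=
  (Lp.coeFn_compMeasurePreserving _ _).trans
    (ae_eq_comp hφ.aemeasurable (Lp.coeFn_LpToLpOfMeasureLeSMul hC h f))

variable (𝕜 E p) in
/-- The composition operator `f ↦ f ∘ φ` from `Lᵖ(ν)` to `Lᵖ(μ)`, bounded because the image of `μ`
under `φ` is at most a finite multiple of `ν`. -/
noncomputable def compLpOfMapLE (hφ : Measurable φ) (hC : C ≠ ∞) (h : μ.map φ ≤ C • ν) :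
    Lp E p ν →L[𝕜] Lp E p μ where
  __ := (Lp.compMeasurePreservingₗᵢ ℝ φ ⟨hφ, rfl⟩).toContinuousLinearMap ∘L
    Lp.LpToLpOfMeasureLeSMul hC h
  map_smul' a f := by
    have hac : μ.map φ ≪ ν := Measure.absolutelyContinuous_of_le_smul h
    refine Lp.ext ?_
    filter_upwards [coeFn_compMeasurePreserving_LpToLpOfMeasureLeSMul hφ hC h (a • f),
      coeFn_compMeasurePreserving_LpToLpOfMeasureLeSMul hφ hC h f,
      Lp.coeFn_smul a (Lp.compMeasurePreserving φ ⟨hφ, rfl⟩ (Lp.LpToLpOfMeasureLeSMul hC h f)),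
      ae_of_ae_map hφ.aemeasurable (hac.ae_le (Lp.coeFn_smul a f))] with x haf hf hsmul hx
    exact haf.trans <| hx.trans <| (congrArg (a • ·) hf.symm).trans hsmul.symm
  cont := ContinuousLinearMap.continuous _

lemma coeFn_compLpOfMapLE (hφ : Measurable φ) (hC : C ≠ ∞) (h : μ.map φ ≤ C • ν) (f : Lp E p ν) :
    compLpOfMapLE 𝕜 E p hφ hC h f =ᵐ[μ] f ∘ φ :=
  coeFn_compMeasurePreserving_LpToLpOfMeasureLeSMul hφ hC h f

end CompLp

section UnitInterval

instance : IsFiniteMeasure mu01 := inferInstanceAs (IsFiniteMeasure (volume.restrict _))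

instance : NullSingletonClass mu01 := inferInstanceAs (NullSingletonClass (volume.restrict _))

lemma ae_mem_Icc_mu01 : ∀ᵐ x ∂mu01, x ∈ Set.Icc (0 : ℝ) 1 :=
  ae_restrict_mem measurableSet_Icc

lemma ae_mem_Ioc_mu01 : ∀ᵐ x ∂mu01, x ∈ Set.Ioc (0 : ℝ) 1 := by
  filter_upwards [ae_mem_Icc_mu01, Measure.ae_ne mu01 0] with x hx hx0
  exact ⟨hx.1.lt_of_ne' hx0, hx.2⟩

lemma map_mul_left_mu01_le {c : ℝ} (hc : c ∈ Set.Ioc (0 : ℝ) 1) :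
    mu01.map (c * ·) ≤ ENNReal.ofReal c⁻¹ • mu01 := by
  refine Measure.le_iff.2 fun s hs => ?_
  have hm : Measurable (c * · : ℝ → ℝ) := measurable_const_mul c
  calc mu01.map (c * ·) s = volume ((c * ·) ⁻¹' s ∩ Set.Icc 0 1) := by
        rw [Measure.map_apply hm hs, mu01, Measure.restrict_apply (hm hs)]
    _ ≤ volume ((c * ·) ⁻¹' (s ∩ Set.Icc 0 1)) :=
        measure_mono fun _ hx =>
          ⟨hx.1, mul_nonneg hc.1.le hx.2.1, mul_le_one₀ hc.2 hx.2.1 hx.2.2⟩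
    _ = (ENNReal.ofReal c⁻¹ • mu01) s := by
        rw [Real.volume_preimage_mul_left hc.1.ne', abs_of_pos (inv_pos.2 hc.1),
          Measure.smul_apply, mu01, Measure.restrict_apply hs, smul_eq_mul]

section Dilation

variable {𝕜 E : Type*} [NormedRing 𝕜] [NormedAddCommGroup E] [NormedSpace ℝ E] [Module 𝕜 E]
  [IsBoundedSMul 𝕜 E] {p : ℝ≥0∞} [Fact (1 ≤ p)] {c : ℝ}

variable (𝕜 E p) in
/-- The dilation `f ↦ (x ↦ f(c x))` of `Lᵖ[0,1]`, for `0 < c ≤ 1`. -/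
noncomputable def dilation (hc : c ∈ Set.Ioc (0 : ℝ) 1) : Lp E p mu01 →L[𝕜] Lp E p mu01 :=
  compLpOfMapLE 𝕜 E p (measurable_const_mul c) ENNReal.ofReal_ne_top (map_mul_left_mu01_le hc)

lemma coeFn_dilation (hc : c ∈ Set.Ioc (0 : ℝ) 1) (f : Lp E p mu01) :
    dilation 𝕜 E p hc f =ᵐ[mu01] fun x => f (c * x) :=
  coeFn_compLpOfMapLE _ _ _ f

end Dilation

lemma ae_mem_of_ae_mul_right_mem {t : Set ℝ} {x : ℝ} (hx : 0 < x)
    (h : ∀ᵐ c ∂mu01, c * x ∈ t) : ∀ᵐ y ∂mu01, y ∈ Set.Icc 0 x → y ∈ t := by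
  have hq : Measure.QuasiMeasurePreserving (x⁻¹ * · : ℝ → ℝ) volume volume := by
    refine ⟨measurable_const_mul _, ?_⟩
    rw [Real.map_volume_mul_left (inv_ne_zero hx.ne')]
    exact Measure.smul_absolutelyContinuous
  refine ae_restrict_of_ae ?_
  filter_upwards [hq.ae ((ae_restrict_iff' measurableSet_Icc).1 h)] with y hy hyx
  have hmem : x⁻¹ * y ∈ Set.Icc (0 : ℝ) 1 :=
    ⟨mul_nonneg (inv_nonneg.2 hx.le) hyx.1, inv_mul_le_one_of_le₀ hyx.2 hx.le⟩
  simpa only [mul_comm x⁻¹, inv_mul_cancel_right₀ hx.ne'] using hy hmem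

lemma ae_mem_or_ae_Icc_mem_of_dilations {t u : Set ℝ} (ht : MeasurableSet t)
    (hu : MeasurableSet u) (h : ∀ c ∈ Set.Ioc (0 : ℝ) 1, ∀ᵐ x ∂mu01, x ∈ u ∨ c * x ∈ t) :
    ∀ᵐ x ∂mu01, x ∈ u ∨ ∀ᵐ y ∂mu01, y ∈ Set.Icc 0 x → y ∈ t := by
  have hmeas : MeasurableSet {q : ℝ × ℝ | q.2 ∈ u ∨ q.1 * q.2 ∈ t} :=
    (measurable_snd hu).union (measurable_mul ht)
  have swapped : ∀ᵐ x ∂mu01, ∀ᵐ c ∂mu01, x ∈ u ∨ c * x ∈ t :=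
    (Measure.ae_ae_comm hmeas).1 (ae_mem_Ioc_mu01.mono h)
  filter_upwards [swapped, ae_mem_Ioc_mu01] with x hx hx01
  refine or_iff_not_imp_left.2 fun hxu => ae_mem_of_ae_mul_right_mem hx01.1 ?_
  exact hx.mono fun c hc => hc.resolve_left hxu

end UnitInterval

section OrderFilter

variable {α : Type*} [LinearOrder α] [TopologicalSpace α] [OrderClosedTopology α]
  [DenselyOrdered α] [TopologicalSpace.SeparableSpace α] {l : Filter α} [CountableInterFilter l]
  {P : α → Prop} {s : α}

lemma eventually_lt_of_forall_lt (h : ∀ q < s, ∀ᶠ x in l, x < q → P x) :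
    ∀ᶠ x in l, x < s → P x := by
  obtain ⟨D, hD, hDdense⟩ := TopologicalSpace.exists_countable_dense α
  have hDall : ∀ᶠ x in l, ∀ q ∈ D, q < s → x < q → P x :=
    (eventually_countable_ball hD).2 fun q _ => by
      by_cases hq : q < s
      · exact (h q hq).mono fun _ hx _ => hx
      · exact Eventually.of_forall fun _ hqs => absurd hqs hq
  filter_upwards [hDall] with x hx hxs
  obtain ⟨q, hqD, hxq, hqs⟩ := hDdense.exists_between hxs
  exact hx q hqD hqs hxq

lemma eventually_gt_of_forall_gt (h : ∀ q > s, ∀ᶠ x in l, q < x → P x) :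
    ∀ᶠ x in l, s < x → P x :=
  have : CountableInterFilter (α := αᵒᵈ) l := ‹CountableInterFilter l›
  eventually_lt_of_forall_lt (α := αᵒᵈ) h

end OrderFilter

section VanishingOn

variable {α 𝕜 E : Type*} [MeasurableSpace α] [NormedAddCommGroup E] {p : ℝ≥0∞} {μ : Measure α}

section NormedRing

variable [NormedRing 𝕜] [Module 𝕜 E] [IsBoundedSMul 𝕜 E]

variable (𝕜 E p μ) in
/-- The subspace of `Lᵖ(μ)` of functions vanishing almost everywhere on `t`; `L²[s,1]` is the case
`t = [0,s]`. -/
def vanishingOn (t : Set α) : Submodule 𝕜 (Lp E p μ) where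
  carrier := {f | ∀ᵐ x ∂μ, x ∈ t → f x = 0}
  add_mem' {f g} hf hg := by
    filter_upwards [hf, hg, Lp.coeFn_add f g] with x hfx hgx hx hxt
    rw [hx, Pi.add_apply, hfx hxt, hgx hxt, add_zero]
  zero_mem' := (Lp.coeFn_zero E p μ).mono fun _ hx _ => hx
  smul_mem' a f hf := by
    filter_upwards [hf, Lp.coeFn_smul a f] with x hfx hx hxt
    rw [hx, Pi.smul_apply, hfx hxt, smul_zero]

lemma mem_vanishingOn {t : Set α} {f : Lp E p μ} :
    f ∈ vanishingOn 𝕜 E p μ t ↔ ∀ᵐ x ∂μ, x ∈ t → f x = 0 :=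
  Iff.rfl

lemma vanishingOn_anti {t u : Set α} (h : t ⊆ u) :
    vanishingOn 𝕜 E p μ u ≤ vanishingOn 𝕜 E p μ t :=
  fun _ hf => (mem_vanishingOn.1 hf).mono fun _ hx hxt => hx (h hxt)

end NormedRing

lemma le_vanishingOn_Icc_of_forall_lt [NormedRing 𝕜] [Module 𝕜 E] [IsBoundedSMul 𝕜 E]
    {μ : Measure ℝ} [NullSingletonClass μ] {K : Submodule 𝕜 (Lp E p μ)} {a s : ℝ}
    (h : ∀ x < s, K ≤ vanishingOn 𝕜 E p μ (Set.Icc a x)) :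
    K ≤ vanishingOn 𝕜 E p μ (Set.Icc a s) := by
  intro f hf
  have hlt : ∀ᵐ y ∂μ, y < s → a ≤ y → f y = 0 := eventually_lt_of_forall_lt fun x hx =>
    (mem_vanishingOn.1 (h x hx hf)).mono fun _ hy hyx hay => hy ⟨hay, hyx.le⟩
  filter_upwards [hlt, Measure.ae_ne μ s] with y hy hys hmem
  exact hy (hmem.2.lt_of_ne hys) hmem.1

lemma inner_eq_zero_of_ae_eq_zero_or [RCLike 𝕜] [InnerProductSpace 𝕜 E] {f g : Lp E 2 μ}
    (h : ∀ᵐ x ∂μ, f x = 0 ∨ g x = 0) : ⟪f, g⟫_𝕜 = 0 := by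
  rw [L2.inner_def]
  refine integral_eq_zero_of_ae (h.mono ?_)
  rintro x (hx | hx) <;> simp [hx]

end VanishingOn

section InvariantSubspaces

variable {𝕜 : Type*} [RCLike 𝕜] {K : Submodule 𝕜 (Lp 𝕜 2 mu01)}

lemma ae_eq_zero_or_mem_vanishingOn_of_mem_orthogonal
    (hmul : ∀ f ∈ K, mulCoord 𝕜 𝕜 2 ae_mem_Icc_mu01 f ∈ K)
    (hdil : ∀ (c : ℝ) (hc : c ∈ Set.Ioc (0 : ℝ) 1), ∀ f ∈ K, dilation 𝕜 𝕜 2 hc f ∈ K)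
    {f g : Lp 𝕜 2 mu01} (hf : f ∈ K) (hg : g ∈ Kᗮ) :
    ∀ᵐ x ∂mu01, g x = 0 ∨ f ∈ vanishingOn 𝕜 𝕜 2 mu01 (Set.Icc 0 x) := by
  have measurable_zeros (u : Lp 𝕜 2 mu01) : MeasurableSet {x | u x = 0} :=
    (Lp.stronglyMeasurable u).measurable (measurableSet_singleton 0)
  refine ae_mem_or_ae_Icc_mem_of_dilations (measurable_zeros f) (measurable_zeros g)
    fun c hc => ?_
  filter_upwards [ae_inner_eq_zero_of_mem_orthogonal hmul (hdil c hc f hf) hg,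
    coeFn_dilation (𝕜 := 𝕜) hc f] with x hinner hx
  rw [hx, RCLike.inner_apply', mul_eq_zero, map_eq_zero] at hinner
  exact hinner

lemma ae_eq_zero_of_mem_orthogonal_of_not_le
    (hmul : ∀ f ∈ K, mulCoord 𝕜 𝕜 2 ae_mem_Icc_mu01 f ∈ K)
    (hdil : ∀ (c : ℝ) (hc : c ∈ Set.Ioc (0 : ℝ) 1), ∀ f ∈ K, dilation 𝕜 𝕜 2 hc f ∈ K)
    {q : ℝ} (hq : ¬ K ≤ vanishingOn 𝕜 𝕜 2 mu01 (Set.Icc 0 q)) {g : Lp 𝕜 2 mu01} (hg : g ∈ Kᗮ) :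
    ∀ᵐ x ∂mu01, q < x → g x = 0 := by
  obtain ⟨f, hf, hfq⟩ := SetLike.not_le_iff_exists.1 hq
  filter_upwards [ae_eq_zero_or_mem_vanishingOn_of_mem_orthogonal hmul hdil hf hg] with x hx hqx
  exact hx.resolve_right fun hfx => hfq (vanishingOn_anti (Set.Icc_subset_Icc_right hqx.le) hfx)

theorem exists_eq_vanishingOn_Icc_of_invariant (hK : IsClosed (K : Set (Lp 𝕜 2 mu01)))
    (hmul : ∀ f ∈ K, mulCoord 𝕜 𝕜 2 ae_mem_Icc_mu01 f ∈ K)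
    (hdil : ∀ (c : ℝ) (hc : c ∈ Set.Ioc (0 : ℝ) 1), ∀ f ∈ K, dilation 𝕜 𝕜 2 hc f ∈ K) :
    ∃ s ∈ Set.Icc (0 : ℝ) 1, K = vanishingOn 𝕜 𝕜 2 mu01 (Set.Icc 0 s) := by
  have : CompleteSpace K := hK.completeSpace_coe
  let A : Set ℝ := {x | x ≤ 1 ∧ K ≤ vanishingOn 𝕜 𝕜 2 mu01 (Set.Icc 0 x)}
  have zero_mem : (0 : ℝ) ∈ A := by
    refine ⟨zero_le_one, le_vanishingOn_Icc_of_forall_lt fun x hx f _ => ?_⟩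
    simp [mem_vanishingOn, Set.Icc_eq_empty hx.not_ge]
  have bdd : BddAbove A := ⟨1, fun _ hx => hx.1⟩
  refine ⟨sSup A, ⟨le_csSup bdd zero_mem, csSup_le ⟨0, zero_mem⟩ fun _ hx => hx.1⟩,
    le_antisymm (le_vanishingOn_Icc_of_forall_lt fun x hx => ?_) fun f hf => ?_⟩
  · obtain ⟨y, hy, hxy⟩ := exists_lt_of_lt_csSup ⟨0, zero_mem⟩ hx
    exact hy.2.trans (vanishingOn_anti (Set.Icc_subset_Icc_right hxy.le))
  · rw [← K.orthogonal_orthogonal, Submodule.mem_orthogonal]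
    intro g hg
    have g_eq_zero : ∀ᵐ x ∂mu01, sSup A < x → g x = 0 := by
      refine eventually_gt_of_forall_gt fun q hq => ?_
      rcases le_or_gt q 1 with hq1 | hq1
      · exact ae_eq_zero_of_mem_orthogonal_of_not_le hmul hdil
          (fun hKq => notMem_of_csSup_lt hq bdd ⟨hq1, hKq⟩) hg
      · exact ae_mem_Icc_mu01.mono fun x hx hqx => absurd hx.2 (hq1.trans hqx).not_ge
    refine inner_eq_zero_of_ae_eq_zero_or ?_
    filter_upwards [g_eq_zero, hf, ae_mem_Icc_mu01] with x hgx hfx hx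
    exact (lt_or_ge (sSup A) x).imp hgx fun hxs => hfx ⟨hx.1, hxs⟩

end InvariantSubspaces

section Monomials

variable {N : ℕ → ℕ} {mono : ℕ → Lp ℂ 2 mu01}

lemma mulCoord_mono (hmono : ∀ k : ℕ, (mono k : ℝ → ℂ) =ᵐ[mu01] fun x => (x : ℂ) ^ k) (k : ℕ) :
    mulCoord ℂ ℂ 2 ae_mem_Icc_mu01 (mono k) = mono (k + 1) := by
  refine Lp.ext ?_
  filter_upwards [coeFn_mulCoord (𝕜 := ℂ) ae_mem_Icc_mu01 (mono k), hmono k, hmono (k + 1)]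
    with x hx hk hk1
  rw [hx, hk, hk1, pow_succ', smul_eq_mul, RCLike.ofReal_eq_complex_ofReal]

lemma dilation_mono (hmono : ∀ k : ℕ, (mono k : ℝ → ℂ) =ᵐ[mu01] fun x => (x : ℂ) ^ k)
    {c : ℝ} (hc : c ∈ Set.Ioc (0 : ℝ) 1) (k : ℕ) :
    dilation ℂ ℂ 2 hc (mono k) = (c : ℂ) ^ k • mono k := by
  have hac := Measure.absolutelyContinuous_of_le_smul (map_mul_left_mu01_le hc)
  refine Lp.ext ?_
  filter_upwards [coeFn_dilation (𝕜 := ℂ) hc (mono k), Lp.coeFn_smul ((c : ℂ) ^ k) (mono k),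
    hmono k, ae_of_ae_map (measurable_const_mul c).aemeasurable (hac.ae_le (hmono k))]
    with x hx hsmul hk hck
  rw [hx, hsmul, hck, Pi.smul_apply, hk, Complex.ofReal_mul, mul_pow, smul_eq_mul]

lemma Mn_le_comap_mulCoord (hN : Monotone N)
    (hmono : ∀ k : ℕ, (mono k : ℝ → ℂ) =ᵐ[mu01] fun x => (x : ℂ) ^ k) (n : ℕ) :
    Mn N mono n ≤ (Mn N mono (n + 1)).comap (mulCoord ℂ ℂ 2 ae_mem_Icc_mu01).toLinearMap := by
  refine Submodule.span_le.2 (Set.forall_mem_image.2 fun k hk => ?_)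
  have hk1 : k + 1 ∈ Set.Icc (n + 1) (n + 1 + N (n + 1)) :=
    ⟨Nat.succ_le_succ hk.1, by linarith [hk.2, hN n.le_succ]⟩
  rw [SetLike.mem_coe, Submodule.mem_comap, ContinuousLinearMap.coe_coe, mulCoord_mono hmono]
  exact Submodule.subset_span (Set.mem_image_of_mem mono hk1)

lemma Mn_le_comap_dilation (hmono : ∀ k : ℕ, (mono k : ℝ → ℂ) =ᵐ[mu01] fun x => (x : ℂ) ^ k)
    {c : ℝ} (hc : c ∈ Set.Ioc (0 : ℝ) 1) (n : ℕ) :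
    Mn N mono n ≤ (Mn N mono n).comap (dilation ℂ ℂ 2 hc).toLinearMap := by
  refine Submodule.span_le.2 (Set.forall_mem_image.2 fun k hk => ?_)
  rw [SetLike.mem_coe, Submodule.mem_comap, ContinuousLinearMap.coe_coe, dilation_mono hmono hc]
  exact Submodule.smul_mem _ _ (Submodule.subset_span (Set.mem_image_of_mem mono hk))

theorem Minf_eq_L2s_general (N : ℕ → ℕ) (hN : Monotone N) (mono : ℕ → Lp ℂ 2 mu01)
    (hmono : ∀ k : ℕ, (mono k : ℝ → ℂ) =ᵐ[mu01] fun x => (x : ℂ) ^ k) :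
    ∃ s ∈ Set.Icc (0 : ℝ) 1,
      Minf N mono =
        {f : Lp ℂ 2 mu01 | ∀ᵐ x ∂mu01, x ∈ Set.Icc 0 s → f x = 0} := by
  have mul_mem (f) (hf : f ∈ innerLimit (Mn N mono)) :
      mulCoord ℂ ℂ 2 ae_mem_Icc_mu01 f ∈ innerLimit (Mn N mono) := by
    rw [← innerLimit_shift (Mn N mono) 1]
    exact map_mem_innerLimit _ (Mn_le_comap_mulCoord hN hmono) hf
  have dilation_mem (c : ℝ) (hc : c ∈ Set.Ioc (0 : ℝ) 1) (f) (hf : f ∈ innerLimit (Mn N mono)) :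
      dilation ℂ ℂ 2 hc f ∈ innerLimit (Mn N mono) :=
    map_mem_innerLimit _ (Mn_le_comap_dilation hmono hc) hf
  obtain ⟨s, hs, hMinf⟩ :=
    exists_eq_vanishingOn_Icc_of_invariant (isClosed_innerLimit (Mn N mono)) mul_mem dilation_mem
  exact ⟨s, hs, congrArg SetLike.coe hMinf⟩

end Monomials

/-- If `{N_n}` is an increasing sequence of natural numbers,
`𝓜_n = span{xⁿ, …, x^{n+N_n}} ⊆ L²[0,1]` and
`𝓜_∞ = {f : dist(f, 𝓜_n) → 0}`, then `𝓜_∞ = L²[s,1]` (the functions vanishing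
a.e. on `[0,s]`) for some `s ∈ [0,1]`. -/
theorem Minf_eq_L2s (N : ℕ → ℕ) (hN : StrictMono N)
    (mono : ℕ → Lp ℂ 2 mu01)
    (hmono : ∀ k : ℕ, (mono k : ℝ → ℂ) =ᵐ[mu01] fun x => (x : ℂ) ^ k) :
    ∃ s ∈ Set.Icc (0 : ℝ) 1,
      Minf N mono =
        {f : Lp ℂ 2 mu01 | ∀ᵐ x ∂mu01, x ∈ Set.Icc 0 s → f x = 0} :=
  Minf_eq_L2s_general N hN.monotone mono hmono
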